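/- For all constants a, η, φ > 0 and every horizon T > 0, the trader Riccati terminal-value problem γ'(t) = (φ − a²/η) + (2a/η)·γ(t) − (1/(2η))·γ(t)² for t ∈ [0,T], with γ(T) = 0, has a unique C¹ solution γ on [0,T]. Moreover this solution is real-analytic on [0,T] and satisfies, for every t ∈ [0,T]: γ(t) < 2a and |γ(t) − 2a| ≤ 2·max(a, √(ηφ)); in addition γ(t) ≤ 0 for all t if ηφ ≥ a², and γ(t) ≥ 0 for all t if ηφ ≤ a². -/

import Mathlib

/-!
The substitution `γ(t) = 2a − 2η·y(T − t)` turns the problem into the initial value problem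
`y' = κ² − y²`, `y(0) = a/η`, where `2(ηκ)² = a² + ηφ`. Its solution is the logarithmic derivative
of `w(s) = κ cosh(κs) + a/η sinh(κs)`, which solves `w'' = κ²w` and stays positive for `s ≥ 0`.
All bounds are read off this formula: `y` is positive and lies between `a/η` and `κ`. Uniqueness
holds because the vector field is locally Lipschitz.
-/

open Set

/-- The trader Riccati terminal-value problem: a function `γ` is a C¹ solution on `[0,T]` of
`γ'(t) = (φ − a²/η) + (2a/η)·γ(t) − (1/(2η))·γ(t)²` with terminal condition `γ(T) = 0`. -/
def IsTraderRiccatiSol (a η φ T : ℝ) (γ : ℝ → ℝ) : Prop :=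
  ContDiffOn ℝ 1 γ (Icc 0 T) ∧ γ T = 0 ∧
    ∀ t ∈ Icc (0 : ℝ) T,
      HasDerivWithinAt γ ((φ - a ^ 2 / η) + (2 * a / η) * γ t - (1 / (2 * η)) * (γ t) ^ 2)
        (Icc 0 T) t

theorem eqOn_Icc_of_hasDerivWithinAt_of_eq_right {E : Type*} [NormedAddCommGroup E]
    [NormedSpace ℝ E] {v : E → E} {f g : ℝ → E} {b c : ℝ} (hv : LocallyLipschitz v)
    (hf : ∀ t ∈ Icc b c, HasDerivWithinAt f (v (f t)) (Icc b c) t)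
    (hg : ∀ t ∈ Icc b c, HasDerivWithinAt g (v (g t)) (Icc b c) t) (hfg : f c = g c) :
    EqOn f g (Icc b c) := by
  have hfc : ContinuousOn f (Icc b c) := fun t ht ↦ (hf t ht).continuousWithinAt
  have hgc : ContinuousOn g (Icc b c) := fun t ht ↦ (hg t ht).continuousWithinAt
  have hcompact : IsCompact (f '' Icc b c ∪ g '' Icc b c) :=
    (isCompact_Icc.image_of_continuousOn hfc).union (isCompact_Icc.image_of_continuousOn hgc)
  obtain ⟨K, hK⟩ := hv.locallyLipschitzOn.exists_lipschitzOnWith_of_compact hcompact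
  exact ODE_solution_unique_of_mem_Icc_left (v := fun _ ↦ v) (fun _ _ ↦ hK)
    hfc (fun t ht ↦ (hf t (Ioc_subset_Icc_self ht)).mono_of_mem_nhdsWithin
      (Icc_mem_nhdsLE_of_mem ht))
    (fun t ht ↦ .inl (mem_image_of_mem f (Ioc_subset_Icc_self ht)))
    hgc (fun t ht ↦ (hg t (Ioc_subset_Icc_self ht)).mono_of_mem_nhdsWithin
      (Icc_mem_nhdsLE_of_mem ht))
    (fun t ht ↦ .inr (mem_image_of_mem g (Ioc_subset_Icc_self ht))) hfg

theorem le_max_sqrt_of_two_mul_sq_le {r a b : ℝ} (ha : 0 ≤ a) (h : 2 * r ^ 2 ≤ a ^ 2 + b) :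
    r ≤ max a √b := by
  by_contra! hr
  obtain ⟨har, hbr⟩ := max_lt_iff.1 hr
  have ha_sq : a ^ 2 < r ^ 2 := pow_lt_pow_left₀ har ha two_ne_zero
  have hb_sq : b < r ^ 2 := (Real.sqrt_lt' (ha.trans_lt har)).1 hbr
  linarith

theorem exists_pos_two_mul_mul_sq_eq {η r : ℝ} (hη : 0 < η) (hr : 0 < r) :
    ∃ κ > 0, 2 * (η * κ) ^ 2 = r := by
  refine ⟨√(r / 2) / η, by positivity, ?_⟩
  rw [mul_div_cancel₀ _ hη.ne', Real.sq_sqrt (by positivity), mul_div_cancel₀ _ two_ne_zero]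

section CoshSinh

variable {p q x : ℝ}

/-- The solution of `w'' = w` with `w 0 = p` and `w' 0 = q`. Rescaled, it linearizes the Riccati
equation; its derivative is `coshSinh q p`. -/
noncomputable def coshSinh (p q x : ℝ) : ℝ :=
  p * Real.cosh x + q * Real.sinh x

theorem coshSinh_zero : coshSinh p q 0 = p := by
  simp [coshSinh]

theorem hasDerivAt_coshSinh : HasDerivAt (coshSinh p q) (coshSinh q p x) x :=
  (((Real.hasDerivAt_cosh x).const_mul p).add ((Real.hasDerivAt_sinh x).const_mul q)).congr_deriv
    (add_comm _ _)

theorem analyticAt_coshSinh : AnalyticAt ℝ (coshSinh p q) x :=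
  (analyticAt_const.mul Real.analyticAt_cosh).add (analyticAt_const.mul Real.analyticAt_sinh)

theorem coshSinh_pos (hp : 0 < p) (hq : -p ≤ q) (hx : 0 ≤ x) : 0 < coshSinh p q x := by
  have hsinh : 0 ≤ (p + q) * Real.sinh x :=
    mul_nonneg (by linarith) (Real.sinh_nonneg_iff.2 hx)
  have hexp : 0 < p * (Real.cosh x - Real.sinh x) := mul_pos hp (sub_pos.2 (Real.sinh_lt_cosh x))
  rw [coshSinh]
  linarith

theorem coshSinh_swap_le (h : q ≤ p) : coshSinh q p x ≤ coshSinh p q x := by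
  have hprod : 0 ≤ (p - q) * (Real.cosh x - Real.sinh x) :=
    mul_nonneg (sub_nonneg.2 h) (sub_nonneg.2 (Real.sinh_lt_cosh x).le)
  rw [coshSinh, coshSinh]
  linarith

end CoshSinh

section RiccatiSol

variable {κ c s : ℝ}

/-- The solution of the Riccati equation `y' = κ² - y²` with `y 0 = c`, for `κ ≠ 0`, encoded as the
logarithmic derivative of `s ↦ coshSinh κ c (κ * s)`; it solves the equation only where that
function does not vanish. -/
noncomputable def riccatiSol (κ c s : ℝ) : ℝ :=
  κ * coshSinh c κ (κ * s) / coshSinh κ c (κ * s)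

theorem riccatiSol_zero (hκ : κ ≠ 0) : riccatiSol κ c 0 = c := by
  rw [riccatiSol, mul_zero, coshSinh_zero, coshSinh_zero, mul_div_cancel_left₀ c hκ]

theorem hasDerivAt_riccatiSol (h : coshSinh κ c (κ * s) ≠ 0) :
    HasDerivAt (riccatiSol κ c) (κ ^ 2 - riccatiSol κ c s ^ 2) s := by
  have hscale (p q : ℝ) :
      HasDerivAt (fun s ↦ coshSinh p q (κ * s)) (coshSinh q p (κ * s) * κ) s :=
    hasDerivAt_coshSinh.comp s (by simpa using (hasDerivAt_id s).const_mul κ)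
  refine (((hscale c κ).const_mul κ).div (hscale κ c) h).congr_deriv ?_
  rw [riccatiSol]
  field

theorem analyticAt_riccatiSol (h : coshSinh κ c (κ * s) ≠ 0) :
    AnalyticAt ℝ (riccatiSol κ c) s := by
  have hscale (p q : ℝ) : AnalyticAt ℝ (fun s ↦ coshSinh p q (κ * s)) s :=
    analyticAt_coshSinh.fun_comp (analyticAt_const.mul analyticAt_id)
  exact (analyticAt_const.mul (hscale c κ)).div (hscale κ c) h

theorem sub_riccatiSol (h : coshSinh κ c (κ * s) ≠ 0) :
    c - riccatiSol κ c s = (c ^ 2 - κ ^ 2) * (Real.sinh (κ * s) / coshSinh κ c (κ * s)) := by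
  rw [riccatiSol]
  field_simp
  simp only [coshSinh]
  ring

theorem coshSinh_mul_pos (hκ : 0 < κ) (hc : -κ ≤ c) (hs : 0 ≤ s) : 0 < coshSinh κ c (κ * s) :=
  coshSinh_pos hκ hc (mul_nonneg hκ.le hs)

theorem riccatiSol_pos (hκ : 0 < κ) (hc : 0 < c) (hs : 0 ≤ s) : 0 < riccatiSol κ c s :=
  div_pos (mul_pos hκ (coshSinh_pos hc (by linarith) (mul_nonneg hκ.le hs)))
    (coshSinh_mul_pos hκ (by linarith) hs)

theorem sinh_div_coshSinh_nonneg (hκ : 0 < κ) (hc : -κ ≤ c) (hs : 0 ≤ s) :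
    0 ≤ Real.sinh (κ * s) / coshSinh κ c (κ * s) :=
  div_nonneg (Real.sinh_nonneg_iff.2 (mul_nonneg hκ.le hs)) (coshSinh_mul_pos hκ hc hs).le

theorem riccatiSol_le_initial (hκ : 0 < κ) (hc : -κ ≤ c) (hs : 0 ≤ s) (h : κ ^ 2 ≤ c ^ 2) :
    riccatiSol κ c s ≤ c := by
  rw [← sub_nonneg, sub_riccatiSol (coshSinh_mul_pos hκ hc hs).ne']
  exact mul_nonneg (sub_nonneg.2 h) (sinh_div_coshSinh_nonneg hκ hc hs)

theorem initial_le_riccatiSol (hκ : 0 < κ) (hc : -κ ≤ c) (hs : 0 ≤ s) (h : c ^ 2 ≤ κ ^ 2) :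
    c ≤ riccatiSol κ c s := by
  rw [← sub_nonpos, sub_riccatiSol (coshSinh_mul_pos hκ hc hs).ne']
  exact mul_nonpos_of_nonpos_of_nonneg (sub_nonpos.2 h) (sinh_div_coshSinh_nonneg hκ hc hs)

theorem riccatiSol_le_max (hκ : 0 < κ) (hc : -κ ≤ c) (hs : 0 ≤ s) :
    riccatiSol κ c s ≤ max c κ := by
  rcases le_total κ c with hκc | hcκ
  · exact le_max_of_le_left (riccatiSol_le_initial hκ hc hs (pow_le_pow_left₀ hκ.le hκc 2))
  · refine le_max_of_le_right ?_
    rw [riccatiSol, div_le_iff₀ (coshSinh_mul_pos hκ hc hs)]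
    exact mul_le_mul_of_nonneg_left (coshSinh_swap_le hcκ) hκ.le

end RiccatiSol

section TraderRiccati

variable {a η φ T κ t : ℝ}

theorem IsTraderRiccatiSol.eqOn {γ₁ γ₂ : ℝ → ℝ} (h₁ : IsTraderRiccatiSol a η φ T γ₁)
    (h₂ : IsTraderRiccatiSol a η φ T γ₂) : EqOn γ₁ γ₂ (Icc 0 T) := by
  have hv : ContDiff ℝ 1 fun y : ℝ ↦
      (φ - a ^ 2 / η) + (2 * a / η) * y - (1 / (2 * η)) * y ^ 2 := by fun_prop
  exact eqOn_Icc_of_hasDerivWithinAt_of_eq_right hv.locallyLipschitz h₁.2.2 h₂.2.2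
    (h₁.2.1.trans h₂.2.1.symm)

/-- The explicit solution of the trader Riccati problem, with the parameter `φ` entering through
the rate `κ > 0` determined by `2 * (η * κ) ^ 2 = a ^ 2 + η * φ`. -/
noncomputable def traderRiccatiSol (a η T κ t : ℝ) : ℝ :=
  2 * a - 2 * η * riccatiSol κ (a / η) (T - t)

theorem traderRiccatiSol_eq_mul_sub (hη : η ≠ 0) :
    traderRiccatiSol a η T κ t = 2 * η * (a / η - riccatiSol κ (a / η) (T - t)) := by
  rw [traderRiccatiSol]
  field

theorem hasDerivAt_traderRiccatiSol (hη : η ≠ 0) (hκφ : 2 * (η * κ) ^ 2 = a ^ 2 + η * φ)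
    (h : coshSinh κ (a / η) (κ * (T - t)) ≠ 0) :
    HasDerivAt (traderRiccatiSol a η T κ)
      ((φ - a ^ 2 / η) + (2 * a / η) * traderRiccatiSol a η T κ t -
        (1 / (2 * η)) * traderRiccatiSol a η T κ t ^ 2) t := by
  have hφ : φ = (2 * (η * κ) ^ 2 - a ^ 2) / η := by rw [hκφ]; field
  have hreverse : HasDerivAt (fun t ↦ T - t) (-1) t := (hasDerivAt_id t).const_sub T
  refine ((((hasDerivAt_riccatiSol h).comp t hreverse).const_mul (2 * η)).const_sub
    (2 * a)).congr_deriv ?_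
  rw [hφ, traderRiccatiSol]
  field

theorem analyticOnNhd_traderRiccatiSol (hκ : 0 < κ) (hc : -κ ≤ a / η) :
    AnalyticOnNhd ℝ (traderRiccatiSol a η T κ) (Iic T) := fun _ ht ↦
  analyticAt_const.sub (analyticAt_const.mul
    ((analyticAt_riccatiSol (coshSinh_mul_pos hκ hc (sub_nonneg.2 ht)).ne').fun_comp
      (analyticAt_const.sub analyticAt_id)))

theorem isTraderRiccatiSol_traderRiccatiSol (hη : η ≠ 0) (hκ : 0 < κ) (hc : -κ ≤ a / η)
    (hκφ : 2 * (η * κ) ^ 2 = a ^ 2 + η * φ) :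
    IsTraderRiccatiSol a η φ T (traderRiccatiSol a η T κ) := by
  refine ⟨((analyticOnNhd_traderRiccatiSol hκ hc).contDiffOn (uniqueDiffOn_Iic T)).mono
      Icc_subset_Iic_self, ?_,
    fun t ht ↦ (hasDerivAt_traderRiccatiSol hη hκφ
      (coshSinh_mul_pos hκ hc (sub_nonneg.2 ht.2)).ne').hasDerivWithinAt⟩
  rw [traderRiccatiSol_eq_mul_sub hη, sub_self, riccatiSol_zero hκ.ne', sub_self, mul_zero]

theorem traderRiccatiSol_lt (ha : 0 < a) (hη : 0 < η) (hκ : 0 < κ) (ht : t ≤ T) :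
    traderRiccatiSol a η T κ t < 2 * a :=
  sub_lt_self _ (mul_pos (mul_pos two_pos hη)
    (riccatiSol_pos hκ (div_pos ha hη) (sub_nonneg.2 ht)))

theorem abs_traderRiccatiSol_sub_le (ha : 0 < a) (hη : 0 < η) (hκ : 0 < κ) (ht : t ≤ T) :
    |traderRiccatiSol a η T κ t - 2 * a| ≤ 2 * max a (η * κ) := by
  have hc : -κ ≤ a / η := by linarith [div_pos ha hη]
  calc |traderRiccatiSol a η T κ t - 2 * a|
      = 2 * a - traderRiccatiSol a η T κ t := by
        rw [abs_sub_comm, abs_of_pos (sub_pos.2 (traderRiccatiSol_lt ha hη hκ ht))]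
    _ = 2 * (η * riccatiSol κ (a / η) (T - t)) := by rw [traderRiccatiSol]; ring
    _ ≤ 2 * (η * max (a / η) κ) := by gcongr; exact riccatiSol_le_max hκ hc (sub_nonneg.2 ht)
    _ = 2 * max a (η * κ) := by rw [mul_max_of_nonneg _ _ hη.le, mul_div_cancel₀ a hη.ne']

theorem traderRiccatiSol_nonpos (hη : 0 < η) (hκ : 0 < κ) (hc : -κ ≤ a / η)
    (h : a ^ 2 ≤ (η * κ) ^ 2) (ht : t ≤ T) : traderRiccatiSol a η T κ t ≤ 0 := by
  have hcκ : (a / η) ^ 2 ≤ κ ^ 2 := by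
    rwa [div_pow, div_le_iff₀' (pow_pos hη 2), ← mul_pow]
  rw [traderRiccatiSol_eq_mul_sub hη.ne']
  exact mul_nonpos_of_nonneg_of_nonpos (by positivity)
    (sub_nonpos.2 (initial_le_riccatiSol hκ hc (sub_nonneg.2 ht) hcκ))

theorem traderRiccatiSol_nonneg (hη : 0 < η) (hκ : 0 < κ) (hc : -κ ≤ a / η)
    (h : (η * κ) ^ 2 ≤ a ^ 2) (ht : t ≤ T) : 0 ≤ traderRiccatiSol a η T κ t := by
  have hκc : κ ^ 2 ≤ (a / η) ^ 2 := by
    rwa [div_pow, le_div_iff₀' (pow_pos hη 2), ← mul_pow]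
  rw [traderRiccatiSol_eq_mul_sub hη.ne']
  exact mul_nonneg (by positivity)
    (sub_nonneg.2 (riccatiSol_le_initial hκ hc (sub_nonneg.2 ht) hκc))

end TraderRiccati

/- For `φ < 0` the term `√(η * φ)` is `0` and the absolute bound reads `|γ t - 2 * a| ≤ 2 * a`. -/
theorem riccati_trader_existence_uniqueness_and_bounds_general
    (a η φ T : ℝ) (ha : 0 < a) (hη : 0 < η) (hφ : 0 < a ^ 2 + η * φ) :
    (∃ γ : ℝ → ℝ, IsTraderRiccatiSol a η φ T γ) ∧
    (∀ γ₁ γ₂ : ℝ → ℝ, IsTraderRiccatiSol a η φ T γ₁ → IsTraderRiccatiSol a η φ T γ₂ →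
      ∀ t ∈ Icc (0 : ℝ) T, γ₁ t = γ₂ t) ∧
    (∀ γ : ℝ → ℝ, IsTraderRiccatiSol a η φ T γ →
      AnalyticOn ℝ γ (Icc 0 T) ∧
      (∀ t ∈ Icc (0 : ℝ) T,
        γ t < 2 * a ∧ |γ t - 2 * a| ≤ 2 * max a (Real.sqrt (η * φ))) ∧
      (a ^ 2 ≤ η * φ → ∀ t ∈ Icc (0 : ℝ) T, γ t ≤ 0) ∧
      (η * φ ≤ a ^ 2 → ∀ t ∈ Icc (0 : ℝ) T, 0 ≤ γ t)) := by
  obtain ⟨κ, hκ, hκφ⟩ := exists_pos_two_mul_mul_sq_eq hη hφ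
  have hc : -κ ≤ a / η := by linarith [div_pos ha hη]
  have hsol : IsTraderRiccatiSol a η φ T (traderRiccatiSol a η T κ) :=
    isTraderRiccatiSol_traderRiccatiSol hη.ne' hκ hc hκφ
  have hmax : max a (η * κ) ≤ max a √(η * φ) :=
    max_le (le_max_left _ _) (le_max_sqrt_of_two_mul_sq_le ha.le hκφ.le)
  refine ⟨⟨_, hsol⟩, fun γ₁ γ₂ h₁ h₂ ↦ h₁.eqOn h₂, fun γ hγ ↦ ?_⟩
  have heq : EqOn γ (traderRiccatiSol a η T κ) (Icc 0 T) := hγ.eqOn hsol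
  refine ⟨((analyticOnNhd_traderRiccatiSol hκ hc).mono Icc_subset_Iic_self).analyticOn.congr heq,
    fun t ht ↦ ?_, fun h t ht ↦ ?_, fun h t ht ↦ ?_⟩ <;> rw [heq ht]
  · exact ⟨traderRiccatiSol_lt ha hη hκ ht.2,
      (abs_traderRiccatiSol_sub_le ha hη hκ ht.2).trans (by gcongr)⟩
  · exact traderRiccatiSol_nonpos hη hκ hc (by linarith) ht.2
  · exact traderRiccatiSol_nonneg hη hκ hc (by linarith) ht.2

theorem riccati_trader_existence_uniqueness_and_bounds
    (a η φ T : ℝ) (ha : 0 < a) (hη : 0 < η) (hφ : 0 < φ) (hT : 0 < T) :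
    (∃ γ : ℝ → ℝ, IsTraderRiccatiSol a η φ T γ) ∧
    (∀ γ₁ γ₂ : ℝ → ℝ, IsTraderRiccatiSol a η φ T γ₁ → IsTraderRiccatiSol a η φ T γ₂ →
      ∀ t ∈ Icc (0 : ℝ) T, γ₁ t = γ₂ t) ∧
    (∀ γ : ℝ → ℝ, IsTraderRiccatiSol a η φ T γ →
      AnalyticOn ℝ γ (Icc 0 T) ∧
      (∀ t ∈ Icc (0 : ℝ) T,
        γ t < 2 * a ∧ |γ t - 2 * a| ≤ 2 * max a (Real.sqrt (η * φ))) ∧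
      (a ^ 2 ≤ η * φ → ∀ t ∈ Icc (0 : ℝ) T, γ t ≤ 0) ∧
      (η * φ ≤ a ^ 2 → ∀ t ∈ Icc (0 : ℝ) T, 0 ≤ γ t)) := by
  exact riccati_trader_existence_uniqueness_and_bounds_general a η φ T ha hη (by positivity)
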